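/- arXiv:2302.02672 — 5 statements merged into one kernel-verified Lean document; each statement's English description precedes it below -/
import Mathlib

section
/- Let n ≥ 1. For each i = 1,…,n let p_i : ℝ → ℝ be a strictly positive probability density on ℝ whose logarithm is twice continuously differentiable, such that the distribution with density p_i has mean zero and variance one, and such that at most one index i has (log p_i)'' constant (i.e., at most one component is Gaussian). Let A be an invertible n×n real matrix and let μ be the product measure on ℝⁿ whose i-th coordinate has density p_i (the law of the vector s of independent components). If the pushforward of μ under the linear map x ↦ A x is itself a product measure (i.e., the coordinates of x = A s are mutually independent), then A has exactly one nonzero entry in each row and each column. -/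
open MeasureTheory Matrix Real

/-!
Let `B = A⁻¹`. The density of `A s` is a constant multiple of `f x = ∏ i, p i ((B x) i)`. If it is
the density of a product measure, then `f x * f y` does not change when `x` and `y` exchange one
of their coordinates. For `k ≠ j` this says that the mixed second differences of `log f` in the
directions `k` and `j` vanish, hence so does the mixed second derivative:
`∑ i, B i k * B i j * (log (p i))'' (s i) = 0` for all `s`.
Each summand depends on its own variable `s i` only and is therefore constant, so at most one
coefficient `B i k * B i j` is nonzero, and then `(log (p i))'' = 0`. This is impossible, because
`log (p i)` would be affine and `p i` not integrable. Hence every row of `B` has a single nonzero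
entry, and the inverse `A` of `B` has the transposed pattern of nonzero entries.
-/

section SigmaFinite

open Function

variable {ι : Type*} [Fintype ι] {α : ι → Type*} [∀ i, MeasurableSpace (α i)]
  {ν : ∀ i, Measure (α i)}

lemma pi_eq_zero_of_apply_eq_zero {i : ι} (hi : ν i = 0) : Measure.pi ν = 0 := by
  have hle := OuterMeasure.pi_pi_le (fun i => (ν i).toOuterMeasure) fun _ => Set.univ
  rw [Set.pi_univ, Finset.prod_eq_zero (Finset.mem_univ i) (by simp [hi])] at hle
  rw [← Measure.measure_univ_eq_zero, Measure.pi, toMeasure_apply _ _ MeasurableSet.univ]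
  exact le_zero_iff.1 hle

lemma exists_cover_prod_image_eval_ne_top {U : Set (∀ i, α i)} (hU : Measure.pi ν U ≠ ⊤) :
    ∃ t : ℕ → Set (∀ i, α i), U ⊆ ⋃ m, t m ∧ ∀ m, ∏ i, ν i (eval i '' t m) ≠ ⊤ := by
  have houter : OuterMeasure.pi (fun i => (ν i).toOuterMeasure) U < ⊤ := by
    rw [Measure.pi] at hU
    exact (le_toMeasure_apply _ _ _).trans_lt hU.lt_top
  simp only [OuterMeasure.pi, OuterMeasure.boundedBy_apply, iInf_lt_iff] at houter
  obtain ⟨t, ht, hsum⟩ := houter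
  refine ⟨t, ht, fun m => ?_⟩
  obtain hm | hm := (t m).eq_empty_or_nonempty
  · exact ENNReal.prod_ne_top fun i _ => by simp [hm]
  · simpa [hm, piPremeasure] using ENNReal.ne_top_of_tsum_ne_top hsum.ne m

lemma exists_countable_cover_prod_image_eval_ne_top (ν : ∀ i, Measure (α i))
    [SigmaFinite (Measure.pi ν)] :
    ∃ S : Set (Set (∀ i, α i)), S.Countable ∧ ⋃₀ S = Set.univ ∧
      ∀ s ∈ S, ∏ i, ν i (eval i '' s) ≠ ⊤ := by
  choose t ht htop using fun k =>
    exists_cover_prod_image_eval_ne_top (measure_spanningSets_lt_top (Measure.pi ν) k).ne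
  refine ⟨Set.range (uncurry t), Set.countable_range _, ?_, by rintro _ ⟨km, rfl⟩; exact htop _ _⟩
  refine Set.eq_univ_of_univ_subset ?_
  rw [← iUnion_spanningSets (Measure.pi ν), Set.sUnion_range, Set.iUnion_prod']
  exact Set.iUnion_mono ht

lemma sigmaFinite_of_sigmaFinite_pi [SigmaFinite (Measure.pi ν)] (hν : Measure.pi ν ≠ 0) (i : ι) :
    SigmaFinite (ν i) := by
  classical
  obtain ⟨S, hScount, hScover, hStop⟩ := exists_countable_cover_prod_image_eval_ne_top ν
  -- `z j` avoids all null projections of sets in `S`. So if `s` meets the line through `z` parallel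
  -- to the `i`-th axis, its `i`-th projection has finite measure, and these projections cover.
  have hgeneric (j : ι) : ∃ z, ∀ s ∈ S, ν j (eval j '' s) = 0 → z ∉ eval j '' s := by
    have : NeZero (ν j) := ⟨fun hj => hν (pi_eq_zero_of_apply_eq_zero hj)⟩
    refine ((ae_ball_iff hScount).2 fun s _ => ?_ :
      ∀ᵐ z ∂ν j, ∀ s ∈ S, ν j (eval j '' s) = 0 → z ∉ eval j '' s).exists
    by_cases h : ν j (eval j '' s) = 0
    · simpa [h] using measure_eq_zero_iff_ae_notMem.1 h
    · simp [h]
  choose z hz using hgeneric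
  refine Measure.sigmaFinite_of_countable (S := (eval i '' ·) '' {s ∈ S | ν i (eval i '' s) < ⊤})
    ((hScount.mono (Set.sep_subset _ _)).image _) (by rintro _ ⟨s, hs, rfl⟩; exact hs.2) ?_
  refine Set.eq_univ_of_forall fun y => ?_
  obtain ⟨s, hs, hzs⟩ := Set.mem_sUnion.1 (hScover.symm ▸ Set.mem_univ (update z i y))
  refine ⟨_, ⟨s, ⟨hs, ?_⟩, rfl⟩, update z i y, hzs, by simp⟩
  have hpos : ∏ j ∈ Finset.univ.erase i, ν j (eval j '' s) ≠ 0 :=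
    Finset.prod_ne_zero_iff.2 fun j hj h0 =>
      hz j s hs h0 ⟨_, hzs, by simp [Finset.ne_of_mem_erase hj]⟩
  refine lt_top_iff_ne_top.2 fun htop => hStop s hs ?_
  rw [← Finset.mul_prod_erase _ _ (Finset.mem_univ i), htop, ENNReal.top_mul hpos]

end SigmaFinite

section Density

variable {ι : Type*} {α : ι → Type*} [∀ i, MeasurableSpace (α i)]
  {μ : ∀ i, Measure (α i)} [∀ i, SigmaFinite (μ i)] {f : ∀ i, α i → ENNReal}

lemma lmarginal_prod [DecidableEq ι] (hf : ∀ i, Measurable (f i)) (s : Finset ι) (x : ∀ i, α i) :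
    (∫⋯∫⁻_s, (fun x => ∏ i ∈ s, f i (x i)) ∂μ) x = ∏ i ∈ s, ∫⁻ t, f i t ∂μ i := by
  induction s using Finset.induction_on with
  | empty => simp
  | insert i s hi ih =>
    have hinner (x : ∀ i, α i) : ∫⁻ t, ∏ j ∈ insert i s, f j (Function.update x i t j) ∂μ i =
        (∫⁻ t, f i t ∂μ i) * ∏ j ∈ s, f j (x j) := by
      rw [← lintegral_mul_const _ (hf i)]
      refine lintegral_congr fun t => ?_
      rw [Finset.prod_insert hi, Function.update_self]
      congr 1
      exact Finset.prod_congr rfl fun j hj => by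
        rw [Function.update_of_ne (ne_of_mem_of_not_mem hj hi)]
    rw [lmarginal_insert' _ (by fun_prop) hi, Finset.prod_insert hi, ← ih]
    simp only [hinner, lmarginal]
    exact lintegral_const_mul _ (by fun_prop)

variable [Fintype ι]

lemma lintegral_pi_prod (hf : ∀ i, Measurable (f i)) :
    ∫⁻ x, ∏ i, f i (x i) ∂Measure.pi μ = ∏ i, ∫⁻ t, f i t ∂μ i := by
  classical
  obtain h | h := isEmpty_or_nonempty (∀ i, α i)
  · obtain ⟨i, hi⟩ := isEmpty_pi.1 h
    rw [lintegral_of_isEmpty, Finset.prod_eq_zero (Finset.mem_univ i) (lintegral_of_isEmpty _ _)]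
  · rw [lintegral_eq_lmarginal_univ h.some, lmarginal_prod hf]

lemma pi_withDensity [∀ i, SigmaFinite ((μ i).withDensity (f i))] (hf : ∀ i, Measurable (f i)) :
    Measure.pi (fun i => (μ i).withDensity (f i)) =
      (Measure.pi μ).withDensity fun x => ∏ i, f i (x i) := by
  refine Measure.pi_eq fun s hs => ?_
  rw [withDensity_apply _ (.univ_pi hs), Measure.restrict_pi_pi, lintegral_pi_prod hf]
  exact Finset.prod_congr rfl fun i _ => (withDensity_apply _ (hs i)).symm

lemma map_withDensity_of_leftInverse {α β : Type*} [MeasurableSpace α] [MeasurableSpace β]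
    {μ : Measure α} {f : α → β} {g : β → α} {h : α → ENNReal} (hf : Measurable f)
    (hg : Measurable g) (hh : Measurable h) (hgf : Function.LeftInverse g f) :
    (μ.withDensity h).map f = (μ.map f).withDensity (h ∘ g) := by
  ext s hs
  rw [Measure.map_apply hf hs, withDensity_apply _ (hf hs), withDensity_apply _ hs,
    setLIntegral_map hs (hh.comp hg) hf]
  simp [hgf _]

end Density

section Exchange

variable {ι α : Type*} [DecidableEq ι]

/-- Exchange of the `k`-th coordinates of two points of `ι → α`. The square of a product measure is
invariant under these maps, which is how independence of the coordinates is used. -/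
def exchangeCoord (k : ι) (q : (ι → α) × (ι → α)) : (ι → α) × (ι → α) :=
  (Function.update q.1 k (q.2 k), Function.update q.2 k (q.1 k))

lemma exchangeCoord_involutive (k : ι) : Function.Involutive (exchangeCoord (α := α) k) :=
  fun q => by simp [exchangeCoord]

lemma measurePreserving_exchangeCoord [Fintype ι] [MeasurableSpace α]
    (ν : ι → Measure α) [∀ i, SigmaFinite (ν i)] (k : ι) :
    MeasurePreserving (exchangeCoord k) ((Measure.pi ν).prod (Measure.pi ν))
      ((Measure.pi ν).prod (Measure.pi ν)) := by
  let swapAt (i : ι) : α × α → α × α := if i = k then Prod.swap else id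
  have hswap (i : ι) : MeasurePreserving (swapAt i) ((ν i).prod (ν i)) ((ν i).prod (ν i)) := by
    by_cases h : i = k
    · simpa [swapAt, h] using Measure.measurePreserving_swap
    · simpa [swapAt, h] using MeasurePreserving.id _
  have hzip := measurePreserving_arrowProdEquivProdArrow α α ι ν ν
  convert hzip.comp ((measurePreserving_pi _ _ hswap).comp hzip.symm) using 1
  ext q i : 3 <;> by_cases h : i = k <;>
    simp [exchangeCoord, swapAt, h, MeasurableEquiv.arrowProdEquivProdArrow,
      Equiv.arrowProdEquivProdArrow]

lemma mul_eq_mul_update_of_pi_eq_withDensity [Fintype ι] [TopologicalSpace α]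
    [SecondCountableTopology α] [MeasurableSpace α] [BorelSpace α] {μ ν : ι → Measure α}
    [∀ i, SigmaFinite (μ i)] [∀ i, (μ i).IsOpenPosMeasure] {f : (ι → α) → ℝ}
    (hf : Continuous f) (hf0 : 0 ≤ f)
    (hν : Measure.pi ν = (Measure.pi μ).withDensity fun x => ENNReal.ofReal (f x)) (k : ι)
    (x y : ι → α) :
    f x * f y = f (Function.update x k (y k)) * f (Function.update y k (x k)) := by
  let F (q : (ι → α) × (ι → α)) : ℝ := f q.1 * f q.2
  have hF : Continuous F := by fun_prop
  have hF0 : 0 ≤ F := fun q => mul_nonneg (hf0 _) (hf0 _)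
  have hexch : Continuous (exchangeCoord (α := α) k) := by unfold exchangeCoord; fun_prop
  have : SigmaFinite (Measure.pi ν) := hν ▸ SigmaFinite.withDensity_ofReal _
  obtain hzero | hne := eq_or_ne (Measure.pi ν) 0
  · rw [hν, withDensity_eq_zero_iff (by fun_prop)] at hzero
    have hf_zero (z : ι → α) : f z = 0 := by
      have hz := congrFun (Measure.eq_of_ae_eq hzero
        (ENNReal.continuous_ofReal.comp hf) continuous_const) z
      exact (ENNReal.ofReal_eq_zero.1 hz).antisymm (hf0 z)
    simp [hf_zero]
  have (i : ι) : SigmaFinite (ν i) := sigmaFinite_of_sigmaFinite_pi hne i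
  have hsquare : (Measure.pi ν).prod (Measure.pi ν) =
      ((Measure.pi μ).prod (Measure.pi μ)).withDensity fun q => ENNReal.ofReal (F q) := by
    rw [hν, prod_withDensity (by fun_prop) (by fun_prop)]
    simp only [F, ENNReal.ofReal_mul (hf0 _)]
  have hae := (measurePreserving_exchangeCoord ν k).map_eq
  rw [hsquare, map_withDensity_of_leftInverse hexch.measurable hexch.measurable (by fun_prop)
    (exchangeCoord_involutive k).leftInverse, (measurePreserving_exchangeCoord μ k).map_eq,
    withDensity_eq_iff_of_sigmaFinite (by fun_prop) (by fun_prop)] at hae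
  have heq := congrFun (Measure.eq_of_ae_eq hae
    (ENNReal.continuous_ofReal.comp (hF.comp hexch)) (ENNReal.continuous_ofReal.comp hF)) (x, y)
  exact ((ENNReal.ofReal_eq_ofReal_iff (hF0 _) (hF0 _)).1 heq).symm

end Exchange

section Calculus

lemma not_integrable_of_monotone {f : ℝ → ℝ} (hf : Monotone f) {a : ℝ} (ha : 0 < f a) :
    ¬ Integrable f := fun hint => by
  have hle : volume (Set.Ici a) ≤ volume {t | f a ≤ f t} := measure_mono fun _ ht => hf ht
  exact (hle.trans_lt (hint.measure_ge_lt_top ha)).ne Real.volume_Ici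

lemma not_integrable_of_antitone {f : ℝ → ℝ} (hf : Antitone f) {a : ℝ} (ha : 0 < f a) :
    ¬ Integrable f := fun hint => by
  have hle : volume (Set.Iic a) ≤ volume {t | f a ≤ f t} := measure_mono fun _ ht => hf ht
  exact (hle.trans_lt (hint.measure_ge_lt_top ha)).ne Real.volume_Iic

lemma not_integrable_of_deriv_deriv_log_eq_zero {p : ℝ → ℝ} (hpos : ∀ t, 0 < p t)
    (hlog : Differentiable ℝ fun t => log (p t))
    (hlog' : Differentiable ℝ (deriv fun t => log (p t)))
    (h : ∀ t, deriv (deriv fun s => log (p s)) t = 0) : ¬ Integrable p := by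
  have hslope (t : ℝ) := is_const_of_deriv_eq_zero hlog' h t 0
  obtain h0 | h0 := le_total 0 (deriv (fun s => log (p s)) 0)
  · have hmono := monotone_of_deriv_nonneg hlog fun t => h0.trans_eq (hslope t).symm
    exact not_integrable_of_monotone
      (fun _ _ hst => (log_le_log_iff (hpos _) (hpos _)).1 (hmono hst)) (hpos 0)
  · have hanti := antitone_of_deriv_nonpos hlog fun t => (hslope t).trans_le h0
    exact not_integrable_of_antitone
      (fun _ _ hst => (log_le_log_iff (hpos _) (hpos _)).1 (hanti hst)) (hpos 0)

variable {ι 𝕜 : Type*} [Fintype ι] [NontriviallyNormedField 𝕜] {f : ι → 𝕜 → 𝕜}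

lemma hasDerivAt_sum_comp_line {c : ι → 𝕜} (hf : ∀ i, DifferentiableAt 𝕜 (f i) (c i))
    (u : ι → 𝕜) :
    HasDerivAt (fun a => ∑ i, f i (c i + a * u i)) (∑ i, u i * deriv (f i) (c i)) 0 := by
  refine HasDerivAt.fun_sum fun i _ => ?_
  have hline : HasDerivAt (fun a => c i + a * u i) (u i) 0 := by
    simpa using ((hasDerivAt_id (0 : 𝕜)).mul_const (u i)).const_add (c i)
  have houter : HasDerivAt (f i) (deriv (f i) (c i)) (c i + 0 * u i) := by
    simpa using (hf i).hasDerivAt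
  rw [mul_comm (u i)]
  exact houter.comp 0 hline

lemma sum_mul_mul_deriv_deriv_eq_zero (hf : ∀ i, Differentiable 𝕜 (f i))
    (hf' : ∀ i, Differentiable 𝕜 (deriv (f i))) {s u v : ι → 𝕜}
    (h : ∀ a b : 𝕜, ∑ i, f i (s i) + ∑ i, f i (s i + b * v i + a * u i) =
      ∑ i, f i (s i + a * u i) + ∑ i, f i (s i + b * v i)) :
    ∑ i, u i * v i * deriv (deriv (f i)) (s i) = 0 := by
  have hfirst (b : 𝕜) :
      ∑ i, u i * deriv (f i) (s i + b * v i) = ∑ i, u i * deriv (f i) (s i) := by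
    have hleft := (hasDerivAt_sum_comp_line (fun i => hf i (s i + b * v i)) u).const_add
      (∑ i, f i (s i))
    have hright := (hasDerivAt_sum_comp_line (fun i => hf i (s i)) u).add_const
      (∑ i, f i (s i + b * v i))
    rw [funext (h · b)] at hleft
    exact hleft.unique hright
  have hsecond := hasDerivAt_sum_comp_line (f := fun i t => u i * deriv (f i) t)
    (fun i => (hf' i (s i)).const_mul (u i)) v
  rw [funext hfirst] at hsecond
  simpa [deriv_const_mul_field, mul_left_comm, mul_assoc] using
    hsecond.unique (hasDerivAt_const _ _)

end Calculus

section Algebra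

lemma apply_eq_apply_of_forall_sum_eq {ι M : Type*} [Fintype ι] {α : ι → Type*}
    [∀ i, Nonempty (α i)] [AddCommMonoid M] [IsRightCancelAdd M] {g : ∀ i, α i → M} {c : M}
    (h : ∀ s : ∀ i, α i, ∑ i, g i (s i) = c) (i : ι) (t t' : α i) : g i t = g i t' := by
  classical
  let rest (s : ∀ i, α i) : M := ∑ j ∈ Finset.univ.erase i, g j (s j)
  let s₀ : ∀ i, α i := fun _ => Classical.arbitrary _
  have hsplit (t : α i) : g i t + rest s₀ = c := by
    rw [← h (Function.update s₀ i t), ← Finset.add_sum_erase _ _ (Finset.mem_univ i),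
      Function.update_self]
    congr 1
    exact Finset.sum_congr rfl fun j hj => by
      rw [Function.update_of_ne (Finset.ne_of_mem_erase hj)]
  exact add_right_cancel ((hsplit t).trans (hsplit t').symm)

lemma eq_zero_of_forall_sum_mul_eq_zero {ι α R : Type*} [Fintype ι] [Ring R] [NoZeroDivisors R]
    {g : ι → α → R} {w : ι → R} (hne : ∀ i, ∃ t, g i t ≠ 0)
    (hconst : ∀ i j, (∃ c, ∀ t, g i t = c) → (∃ c, ∀ t, g j t = c) → i = j)
    (h : ∀ s : ι → α, ∑ i, w i * g i (s i) = 0) (i : ι) : w i = 0 := by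
  by_contra hi
  obtain ⟨t, ht⟩ := hne i
  have : Nonempty α := ⟨t⟩
  have hconst_of_ne {j : ι} (hj : w j ≠ 0) : ∃ c, ∀ t, g j t = c :=
    ⟨g j t, fun t' => mul_left_cancel₀ hj <|
      apply_eq_apply_of_forall_sum_eq (g := fun i t => w i * g i t) h j t' t⟩
  have hothers {j : ι} (hj : j ≠ i) : w j = 0 := by
    by_contra hwj
    exact hj (hconst j i (hconst_of_ne hwj) (hconst_of_ne hi))
  have hsum := h fun _ => t
  rw [Finset.sum_eq_single i (fun j _ hj => by rw [hothers hj, zero_mul]) (by simp)] at hsum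
  exact mul_ne_zero hi ht hsum

lemma exists_perm_forall_ne_zero_iff {ι R : Type*} [Fintype ι] [DecidableEq ι] [Semiring R]
    [NoZeroDivisors R] [Nontrivial R] {A B : Matrix ι ι R} (hBA : B * A = 1)
    (hB : ∀ i k j, k ≠ j → B i k * B i j = 0) :
    ∃ σ : Equiv.Perm ι, ∀ i j, A (σ i) j ≠ 0 ↔ i = j := by
  have hrow (i : ι) : ∃ k, B i k ≠ 0 := by
    by_contra! hzero
    simpa [Matrix.mul_apply, hzero] using congrFun₂ hBA i i
  choose σ hσ using hrow
  have hoff (i k : ι) (hk : k ≠ σ i) : B i k = 0 :=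
    (mul_eq_zero.1 (hB i k (σ i) hk)).resolve_right (hσ i)
  have hentry (i j : ι) : B i (σ i) * A (σ i) j = (1 : Matrix ι ι R) i j := by
    rw [← hBA, Matrix.mul_apply,
      Finset.sum_eq_single (σ i) (fun k _ hk => by rw [hoff i k hk, zero_mul]) (by simp)]
  have hsupport (i j : ι) : A (σ i) j ≠ 0 ↔ i = j := by
    rw [← mul_ne_zero_iff_left (hσ i), hentry, Matrix.one_apply]
    simp
  have hinj : Function.Injective σ := fun i j hij => by rw [← hsupport, hij, hsupport]
  exact ⟨.ofBijective σ (Finite.injective_iff_bijective.1 hinj), hsupport⟩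

lemma existsUnique_ne_zero_of_perm {ι R : Type*} [Zero R] {A : Matrix ι ι R} {σ : Equiv.Perm ι}
    (h : ∀ i j, A (σ i) j ≠ 0 ↔ i = j) :
    (∀ k, ∃! l, A k l ≠ 0) ∧ (∀ l, ∃! k, A k l ≠ 0) := by
  refine ⟨fun k => ?_, fun l => ⟨σ l, (h l l).2 rfl, fun k hk => ?_⟩⟩
  · obtain ⟨i, rfl⟩ := σ.surjective k
    simp [h]
  · obtain ⟨i, rfl⟩ := σ.surjective k
    rw [(h i l).1 hk]

end Algebra

section Mixing

variable {ι : Type*} [Fintype ι] [DecidableEq ι] {p : ι → ℝ → ℝ} {A : Matrix ι ι ℝ}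

lemma map_mulVec_withDensity (hA : IsUnit A) {f : (ι → ℝ) → ENNReal} (hf : Measurable f) :
    Measure.map (fun x => A *ᵥ x) (volume.withDensity f) =
      volume.withDensity fun y => ENNReal.ofReal |A.det⁻¹| * f (A⁻¹ *ᵥ y) := by
  have hdet : IsUnit A.det := (isUnit_iff_isUnit_det A).1 hA
  have hvol : Measure.map (fun x => A *ᵥ x) volume =
      ENNReal.ofReal |A.det⁻¹| • (volume : Measure (ι → ℝ)) :=
    Real.map_matrix_volume_pi_eq_smul_volume_pi hdet.ne_zero
  rw [map_withDensity_of_leftInverse (g := fun y => A⁻¹ *ᵥ y) (by fun_prop) (by fun_prop) hf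
    fun x => by simp only [mulVec_mulVec, nonsing_inv_mul A hdet, one_mulVec], hvol,
    withDensity_smul_measure, ← withDensity_smul _ (by fun_prop)]
  rfl

lemma map_mulVec_pi_withDensity (hA : IsUnit A) (hp0 : ∀ i t, 0 ≤ p i t)
    (hp : ∀ i, Measurable (p i)) :
    Measure.map (fun x => A *ᵥ x)
        (Measure.pi fun i => volume.withDensity fun t => ENNReal.ofReal (p i t)) =
      volume.withDensity fun y =>
        ENNReal.ofReal (|A.det⁻¹| * ∏ i, p i ((A⁻¹ *ᵥ y) i)) := by
  rw [pi_withDensity fun i => by fun_prop, ← volume_pi, map_mulVec_withDensity hA (by fun_prop)]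
  simp only [ENNReal.ofReal_mul (abs_nonneg _), ENNReal.ofReal_prod_of_nonneg fun i _ => hp0 i _]

lemma prod_mul_prod_eq_of_map_mulVec_eq_pi (hA : IsUnit A) (hp0 : ∀ i t, 0 ≤ p i t)
    (hp : ∀ i, Continuous (p i)) {ν : ι → Measure ℝ}
    (hν : Measure.map (fun x => A *ᵥ x)
      (Measure.pi fun i => volume.withDensity fun t => ENNReal.ofReal (p i t)) = Measure.pi ν)
    (k : ι) (x y : ι → ℝ) :
    (∏ i, p i ((A⁻¹ *ᵥ x) i)) * ∏ i, p i ((A⁻¹ *ᵥ y) i) =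
      (∏ i, p i ((A⁻¹ *ᵥ Function.update x k (y k)) i)) *
        ∏ i, p i ((A⁻¹ *ᵥ Function.update y k (x k)) i) := by
  have hdet : |A.det⁻¹| ≠ 0 :=
    abs_ne_zero.2 (inv_ne_zero ((isUnit_iff_isUnit_det A).1 hA).ne_zero)
  rw [map_mulVec_pi_withDensity hA hp0 fun i => (hp i).measurable, volume_pi] at hν
  have hcont : Continuous fun y : ι → ℝ => |A.det⁻¹| * ∏ i, p i ((A⁻¹ *ᵥ y) i) :=
    continuous_const.mul (continuous_finsetProd _ fun i _ => (hp i).comp (by fun_prop))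
  have hexch := mul_eq_mul_update_of_pi_eq_withDensity hcont
    (fun x => mul_nonneg (abs_nonneg _) (Finset.prod_nonneg fun i _ => hp0 i _)) hν.symm k x y
  simp only [mul_mul_mul_comm |A.det⁻¹|] at hexch
  exact mul_left_cancel₀ (mul_ne_zero hdet hdet) hexch

lemma sum_add_sum_eq_of_prod_mul_prod_eq {κ : Type*} [Fintype κ] {p : κ → ℝ → ℝ}
    {B : Matrix κ ι ℝ} (hpos : ∀ i t, 0 < p i t) {k j : ι} (hkj : k ≠ j)
    (h : ∀ x y : ι → ℝ, (∏ i, p i ((B *ᵥ x) i)) * ∏ i, p i ((B *ᵥ y) i) =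
      (∏ i, p i ((B *ᵥ Function.update x k (y k)) i)) *
        ∏ i, p i ((B *ᵥ Function.update y k (x k)) i)) (x : ι → ℝ) (a b : ℝ) :
    ∑ i, log (p i ((B *ᵥ x) i)) + ∑ i, log (p i ((B *ᵥ x) i + b * B i j + a * B i k)) =
      ∑ i, log (p i ((B *ᵥ x) i + a * B i k)) + ∑ i, log (p i ((B *ᵥ x) i + b * B i j)) := by
  let y : ι → ℝ := x + Pi.single j b + Pi.single k a
  have hx : Function.update x k (y k) = x + Pi.single k a := by
    ext i
    obtain rfl | hi := eq_or_ne i k <;> simp [y, *]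
  have hy : Function.update y k (x k) = x + Pi.single j b := by
    ext i
    obtain rfl | hi := eq_or_ne i k <;> simp [y, *]
  have hprod := h x y
  rw [hx, hy] at hprod
  have hne (s : κ → ℝ) : ∏ i, p i (s i) ≠ 0 := Finset.prod_ne_zero_iff.2 fun i _ => (hpos i _).ne'
  have hlog := congrArg log hprod
  rw [log_mul (hne _) (hne _), log_mul (hne _) (hne _)] at hlog
  simpa [y, log_prod fun i _ => (hpos i _).ne', mulVec_add, mulVec_single, mul_comm] using hlog

lemma sum_inv_mul_inv_mul_deriv_deriv_log_eq_zero (hpos : ∀ i t, 0 < p i t)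
    (hlog : ∀ i, Differentiable ℝ fun t => log (p i t))
    (hlog' : ∀ i, Differentiable ℝ (deriv fun t => log (p i t))) (hA : IsUnit A)
    {ν : ι → Measure ℝ}
    (hν : Measure.map (fun x => A *ᵥ x)
      (Measure.pi fun i => volume.withDensity fun t => ENNReal.ofReal (p i t)) = Measure.pi ν)
    {k j : ι} (hkj : k ≠ j) (s : ι → ℝ) :
    ∑ i, A⁻¹ i k * A⁻¹ i j * deriv (deriv fun t => log (p i t)) (s i) = 0 := by
  have hp (i : ι) : Continuous (p i) := by
    simpa only [Function.comp_def, exp_log (hpos i _)] using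
      continuous_exp.comp (hlog i).continuous
  have hs : A⁻¹ *ᵥ (A *ᵥ s) = s := by
    rw [mulVec_mulVec, nonsing_inv_mul A ((isUnit_iff_isUnit_det A).1 hA), one_mulVec]
  have hdiff := sum_add_sum_eq_of_prod_mul_prod_eq hpos hkj
    (prod_mul_prod_eq_of_map_mulVec_eq_pi hA (fun i t => (hpos i t).le) hp hν k) (A *ᵥ s)
  rw [hs] at hdiff
  exact sum_mul_mul_deriv_deriv_eq_zero hlog hlog' hdiff

end Mixing

theorem linear_ICA_identifiability_general {ι : Type*} [Fintype ι] [DecidableEq ι]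
    {p : ι → ℝ → ℝ} (hpos : ∀ i t, 0 < p i t) (hint : ∀ i, Integrable (p i))
    (hlog : ∀ i, Differentiable ℝ fun t => log (p i t))
    (hlog' : ∀ i, Differentiable ℝ (deriv fun t => log (p i t)))
    (hgauss : ∀ i j, (∃ c, ∀ t, deriv (deriv fun s => log (p i s)) t = c) →
      (∃ c, ∀ t, deriv (deriv fun s => log (p j s)) t = c) → i = j)
    {A : Matrix ι ι ℝ} (hA : IsUnit A)
    (hprod : ∃ ν : ι → Measure ℝ, Measure.map (fun x => A *ᵥ x)
      (Measure.pi fun i => volume.withDensity fun t => ENNReal.ofReal (p i t)) = Measure.pi ν) :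
    (∀ k, ∃! l, A k l ≠ 0) ∧ (∀ l, ∃! k, A k l ≠ 0) := by
  obtain ⟨ν, hν⟩ := hprod
  have hne (i : ι) : ∃ t, deriv (deriv fun s => log (p i s)) t ≠ 0 := by
    by_contra! hzero
    exact not_integrable_of_deriv_deriv_log_eq_zero (hpos i) (hlog i) (hlog' i) hzero (hint i)
  have hinv (i k j : ι) (hkj : k ≠ j) : A⁻¹ i k * A⁻¹ i j = 0 :=
    eq_zero_of_forall_sum_mul_eq_zero (w := fun i => A⁻¹ i k * A⁻¹ i j) hne hgauss
      (sum_inv_mul_inv_mul_deriv_deriv_log_eq_zero hpos hlog hlog' hA hν hkj) i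
  obtain ⟨σ, hσ⟩ := exists_perm_forall_ne_zero_iff
    (nonsing_inv_mul A ((isUnit_iff_isUnit_det A).1 hA)) hinv
  exact existsUnique_ne_zero_of_perm hσ

/-- Identifiability of linear ICA: if the independent components have smooth
strictly positive densities with mean zero and unit variance, at most one of them
is "Gaussian" in the sense of having constant second log-derivative, and a linear
invertible mixing of them again has independent coordinates (i.e. the pushforward
is a product measure), then the mixing matrix has exactly one nonzero entry
in each row and each column. -/
theorem linear_ICA_identifiability
    (n : ℕ) (hn : 1 ≤ n)
    (p : Fin n → ℝ → ℝ)
    (hpos : ∀ i, ∀ t : ℝ, 0 < p i t)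
    (hdens : ∀ i, ∫ t : ℝ, p i t = 1)
    (hsmooth : ∀ i, ContDiff ℝ 2 (fun t => Real.log (p i t)))
    (hmean : ∀ i, ∫ t : ℝ, t * p i t = 0)
    (hvar : ∀ i, ∫ t : ℝ, t ^ 2 * p i t = 1)
    (hgauss : ∀ i j : Fin n,
      (∃ c : ℝ, ∀ t : ℝ, deriv (deriv (fun s => Real.log (p i s))) t = c) →
      (∃ c : ℝ, ∀ t : ℝ, deriv (deriv (fun s => Real.log (p j s))) t = c) →
      i = j)
    (A : Matrix (Fin n) (Fin n) ℝ) (hA : IsUnit A)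
    (μ : Measure (Fin n → ℝ))
    (hμ : μ = Measure.pi (fun i => volume.withDensity (fun t => ENNReal.ofReal (p i t))))
    (hprod : ∃ ν : Fin n → Measure ℝ,
      Measure.map (fun x => A.mulVec x) μ = Measure.pi ν) :
    (∀ k : Fin n, ∃! l : Fin n, A k l ≠ 0) ∧
    (∀ l : Fin n, ∃! k : Fin n, A k l ≠ 0) := by
  exact linear_ICA_identifiability_general hpos
    (fun i => .of_integral_ne_zero (by simp [hdens i]))
    (fun i => (hsmooth i).differentiable (by norm_num))
    (fun i => ((hsmooth i).iterate_deriv' 1 1).differentiable (by norm_num))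
    hgauss hA (hμ ▸ hprod)
end

section
/- Let A be a real orthogonal n×n matrix and let d : Fin n → ℝ have pairwise distinct values (d i ≠ d j for i ≠ j). If the matrix Aᵀ · diag(d) · A is diagonal, then A has exactly one nonzero entry in each row and each column. -/
open Matrix

/-!
If `B = A⁻¹` and `B * diagonal d * A = diagonal e`, then `diagonal d * A = A * diagonal e`;
comparing entries, `A i j ≠ 0` forces `d i = e j`. As `d` is injective, a column of `A` has at most
one nonzero entry, and by invertibility it has exactly one. Sending each column to the row of its
nonzero entry is a surjection, because `A` has no zero row, hence a bijection by finiteness.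
-/

theorem forall_existsUnique_of_forall_existsUnique_flip {α : Type*} [Finite α] {r : α → α → Prop}
    (hex : ∀ a, ∃ b, r a b) (hflip : ∀ b, ∃! a, r a b) : ∀ a, ∃! b, r a b := by
  choose f hf hf_unique using hflip
  have hf_surj : Function.Surjective f := fun a =>
    let ⟨b, hab⟩ := hex a
    ⟨b, (hf_unique b a hab).symm⟩
  have hf_inj : Function.Injective f := Finite.injective_iff_surjective.mpr hf_surj
  intro a
  obtain ⟨b, rfl⟩ := hf_surj a
  exact ⟨b, hf b, fun c hc => hf_inj (hf_unique c _ hc).symm⟩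

theorem exists_apply_ne_zero_of_mul_apply_ne_zero {l m n R : Type*} [Fintype m]
    [NonUnitalNonAssocSemiring R] {A : Matrix l m R} {B : Matrix m n R} {i : l} {k : n}
    (h : (A * B) i k ≠ 0) : ∃ j, A i j ≠ 0 ∧ B j k ≠ 0 := by
  rw [mul_apply] at h
  obtain ⟨j, -, hj⟩ := Finset.exists_ne_zero_of_sum_ne_zero h
  exact ⟨j, left_ne_zero_of_mul hj, right_ne_zero_of_mul hj⟩

section Intertwining

variable {m n R : Type*} [Fintype m] [Fintype n] [DecidableEq m] [DecidableEq n]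
  [NonUnitalNonAssocCommSemiring R] [IsCancelMulZero R] {A : Matrix m n R} {d : m → R} {e : n → R}

theorem eq_of_diagonal_mul_eq_mul_diagonal (h : diagonal d * A = A * diagonal e) {i : m} {j : n}
    (hij : A i j ≠ 0) : d i = e j := by
  have hentry : d i * A i j = A i j * e j := by
    rw [← diagonal_mul, h, mul_diagonal]
  exact mul_left_cancel₀ hij ((mul_comm _ _).trans hentry)

theorem existsUnique_apply_ne_zero_of_diagonal_mul_eq_mul_diagonal
    (h : diagonal d * A = A * diagonal e) (hd : Function.Injective d) {j : n}
    (hj : ∃ i, A i j ≠ 0) : ∃! i, A i j ≠ 0 := by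
  obtain ⟨i, hi⟩ := hj
  refine ⟨i, hi, fun k hk => hd ?_⟩
  calc
    d k = e j := eq_of_diagonal_mul_eq_mul_diagonal h hk
    _ = d i := (eq_of_diagonal_mul_eq_mul_diagonal h hi).symm

end Intertwining

theorem orthogonal_diagonalization_monomial_general {n R : Type*} [Fintype n] [DecidableEq n]
    [CommSemiring R] [IsDomain R] {A B : Matrix n n R} (hBA : B * A = 1) {d : n → R}
    (hd : Function.Injective d) (hdiag : (B * diagonal d * A).IsDiag) :
    (∀ i, ∃! j, A i j ≠ 0) ∧ (∀ j, ∃! i, A i j ≠ 0) := by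
  have hAB : A * B = 1 := mul_eq_one_comm.mp hBA
  have hrow (i : n) : ∃ j, A i j ≠ 0 := by
    have hii : (A * B) i i ≠ 0 := by simp [hAB]
    exact (exists_apply_ne_zero_of_mul_apply_ne_zero hii).imp fun _ => And.left
  have hcol (j : n) : ∃ i, A i j ≠ 0 := by
    have hjj : (B * A) j j ≠ 0 := by simp [hBA]
    exact (exists_apply_ne_zero_of_mul_apply_ne_zero hjj).imp fun _ => And.right
  have hintertwine : diagonal d * A = A * diagonal (B * diagonal d * A).diag := by
    rw [hdiag.diagonal_diag, Matrix.mul_assoc B, ← Matrix.mul_assoc A, hAB, Matrix.one_mul]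
  have hcol_unique (j : n) : ∃! i, A i j ≠ 0 :=
    existsUnique_apply_ne_zero_of_diagonal_mul_eq_mul_diagonal hintertwine hd (hcol j)
  exact ⟨forall_existsUnique_of_forall_existsUnique_flip hrow hcol_unique, hcol_unique⟩

/-- Uniqueness of the eigendecomposition step: if `A` is orthogonal, `d` has
pairwise distinct entries, and `Aᵀ * diagonal d * A` is diagonal, then `A` has
exactly one nonzero entry in each row and each column. -/
theorem orthogonal_diagonalization_monomial
    (n : ℕ) (A : Matrix (Fin n) (Fin n) ℝ) (hA : Aᵀ * A = 1)
    (d : Fin n → ℝ) (hd : ∀ i j : Fin n, i ≠ j → d i ≠ d j)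
    (hdiag : ∀ k l : Fin n, k ≠ l → (Aᵀ * Matrix.diagonal d * A) k l = 0) :
    (∀ k : Fin n, ∃! l : Fin n, A k l ≠ 0) ∧
    (∀ l : Fin n, ∃! k : Fin n, A k l ≠ 0) :=
  orthogonal_diagonalization_monomial_general hA
    (Function.injective_iff_pairwise_ne.mpr hd) hdiag
end

section
/- Darmois construction / conditional probability integral transform: let ρ be a probability measure on α × ℝ (α a measurable space with suitable regularity) such that for ρ.fst-almost every a ∈ α the conditional cumulative distribution function x ↦ condCDF ρ a x is continuous. Then the pushforward of ρ under the map (a, x) ↦ (a, condCDF ρ a x) equals the product of ρ.fst with the uniform probability measure on [0,1] (Lebesgue measure restricted to the interval [0,1]). In particular, the random variable z = g(x₁, x₂) with g(ξ₁, ξ₂) = P(x₂ < ξ₂ | x₁ = ξ₁) is uniformly distributed and statistically independent of the first coordinate x₁. -/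
open MeasureTheory ProbabilityTheory

/-!
Disintegrating `ρ` over its first marginal, its fibre over `a` is the Stieltjes measure of
`condCDF ρ a`. When this CDF is continuous it pushes the fibre forward to the uniform law on
`[0, 1]`. As that law does not depend on `a`, the image of `ρ` is a product measure.
-/

section ProbabilityIntegralTransform

open Set Filter Topology

lemma exists_preimage_Iic_eq_Iic {R S : Type*} [ConditionallyCompleteLinearOrder R]
    [TopologicalSpace R] [OrderTopology R] [DenselyOrdered R] [LinearOrder S]
    [TopologicalSpace S] [OrderClosedTopology S] {f : R → S} (hmono : Monotone f)
    (hcont : Continuous f) {a b : R} {t : S} (ha : f a ≤ t) (hb : t < f b) :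
    ∃ x, f x = t ∧ f ⁻¹' Iic t = Iic x := by
  have hbdd : BddAbove (f ⁻¹' Iic t) := ⟨b, fun y hy => (hmono.reflect_lt (hy.trans_lt hb)).le⟩
  obtain ⟨hle, hub⟩ := (isClosed_Iic.preimage hcont).isGreatest_csSup ⟨a, ha⟩ hbdd
  obtain ⟨y, rfl⟩ := mem_range_of_exists_le_of_exists_ge hcont ⟨a, ha⟩ ⟨b, hb.le⟩
  exact ⟨_, hle.antisymm (hmono (hub le_rfl)),
    Subset.antisymm hub fun x hx => (hmono hx).trans hle⟩

variable {R : Type*} [ConditionallyCompleteLinearOrder R] [Nonempty R] [TopologicalSpace R]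
  [OrderTopology R] [DenselyOrdered R] [SecondCountableTopology R] [MeasurableSpace R]
  [BorelSpace R] {F : StieltjesFunction R} {l u : ℝ}

lemma stieltjesMeasure_preimage_Iic (hF : Continuous F) (hl : Tendsto F atBot (𝓝 l))
    (hu : Tendsto F atTop (𝓝 u)) (t : ℝ) :
    F.measure (F ⁻¹' Iic t) = ENNReal.ofReal (min u t - l) := by
  by_cases hbelow : ∀ x, F x ≤ t
  · have hut : u ≤ t := le_of_tendsto' hu hbelow
    rw [preimage_eq_univ_iff.2 (range_subset_iff.2 hbelow), F.measure_univ hl hu,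
      min_eq_left hut]
  obtain ⟨b, hb⟩ : ∃ b, t < F b := by simpa only [not_forall, not_le] using hbelow
  by_cases habove : ∀ x, t < F x
  · have htl : t ≤ l := ge_of_tendsto' hl fun x => (habove x).le
    have hempty : F ⁻¹' Iic t = ∅ := eq_empty_of_forall_notMem fun x hx => (habove x).not_ge hx
    rw [hempty, measure_empty,
      ENNReal.ofReal_of_nonpos (sub_nonpos.2 ((min_le_right u t).trans htl))]
  obtain ⟨a, ha⟩ : ∃ a, F a ≤ t := by simpa only [not_forall, not_lt] using habove
  obtain ⟨x, rfl, hx⟩ := exists_preimage_Iic_eq_Iic F.mono hF ha hb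
  rw [hx, F.measure_Iic hl, min_eq_right (F.mono.ge_of_tendsto hu x)]

theorem map_stieltjesMeasure_of_continuous (hF : Continuous F) (hl : Tendsto F atBot (𝓝 l))
    (hu : Tendsto F atTop (𝓝 u)) :
    F.measure.map F = volume.restrict (Icc l u) := by
  have := F.isFiniteMeasure hl hu
  refine Measure.ext_of_Iic _ _ fun t => ?_
  have hinter : Iic t ∩ Icc l u = Icc l (min u t) := by
    rw [inter_comm, ← Ici_inter_Iic, inter_assoc, Iic_inter_Iic, Ici_inter_Iic]
  rw [Measure.map_apply hF.measurable measurableSet_Iic, stieltjesMeasure_preimage_Iic hF hl hu,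
    Measure.restrict_apply measurableSet_Iic, hinter, Real.volume_Icc]

theorem map_cdf_of_continuous (μ : Measure ℝ) [IsProbabilityMeasure μ] (hμ : Continuous (cdf μ)) :
    μ.map (cdf μ) = volume.restrict (Icc 0 1) := by
  simpa only [measure_cdf] using
    map_stieltjesMeasure_of_continuous hμ (tendsto_cdf_atBot μ) (tendsto_cdf_atTop μ)

end ProbabilityIntegralTransform

section Kernel

variable {α β γ : Type*} [MeasurableSpace α] [MeasurableSpace β] [MeasurableSpace γ]

lemma measurable_kernel_Iic [LinearOrder β] [TopologicalSpace β] [OrderClosedTopology β]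
    [SecondCountableTopology β] [OpensMeasurableSpace β] (κ : Kernel α β) [IsSFiniteKernel κ] :
    Measurable fun p : α × β => κ p.1 (Set.Iic p.2) :=
  Kernel.measurable_kernel_prodMk_left (κ := κ.comap Prod.fst measurable_fst)
    (measurableSet_le measurable_snd measurable_fst.snd)

lemma measurable_cdf_kernel (κ : Kernel α ℝ) [IsMarkovKernel κ] :
    Measurable fun p : α × ℝ => cdf (κ p.1) p.2 := by
  simpa only [cdf_eq_real] using! (measurable_kernel_Iic κ).ennreal_toReal

lemma map_fst_prodMk_compProd {μ : Measure α} [SFinite μ] {κ : Kernel α β} [IsSFiniteKernel κ]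
    {η : Kernel α γ} [IsSFiniteKernel η] {g : α × β → γ} (hg : Measurable g)
    (hmap : ∀ᵐ a ∂μ, (κ a).map (fun x => g (a, x)) = η a) :
    (μ ⊗ₘ κ).map (fun p => (p.1, g p)) = μ ⊗ₘ η := by
  have hpair : Measurable fun p : α × β => (p.1, g p) := measurable_fst.prodMk hg
  ext s hs
  rw [Measure.map_apply hpair hs, Measure.compProd_apply (hpair hs), Measure.compProd_apply hs]
  refine lintegral_congr_ae ?_
  filter_upwards [hmap] with a ha
  have hg_a : Measurable fun x => g (a, x) := hg.comp measurable_prodMk_left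
  rw [← ha, Measure.map_apply hg_a (measurable_prodMk_left hs)]
  rfl

theorem map_cdf_compProd (μ : Measure α) [SFinite μ] (κ : Kernel α ℝ) [IsMarkovKernel κ]
    (hcont : ∀ᵐ a ∂μ, Continuous (cdf (κ a))) :
    (μ ⊗ₘ κ).map (fun p => (p.1, cdf (κ p.1) p.2)) =
      μ.prod (volume.restrict (Set.Icc 0 1)) := by
  rw [← Measure.compProd_const]
  refine map_fst_prodMk_compProd (measurable_cdf_kernel κ) ?_
  filter_upwards [hcont] with a ha
  exact map_cdf_of_continuous (κ a) ha

end Kernel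

section CondCDF

variable {α : Type*} [MeasurableSpace α]

/-- The Markov kernel whose value at `a` is the law with distribution function `condCDF ρ a`: a
regular conditional law of the second coordinate given the first. Unlike `Measure.condKernel`,
its distribution functions are `condCDF ρ a` for every `a`, not just almost every one. -/
noncomputable def condCDFKernel (ρ : Measure (α × ℝ)) : Kernel α ℝ where
  toFun a := (condCDF ρ a).measure
  measurable' := measurable_measure_condCDF ρ

instance (ρ : Measure (α × ℝ)) : IsMarkovKernel (condCDFKernel ρ) :=
  ⟨instIsProbabilityMeasureCondCDF ρ⟩

lemma cdf_condCDFKernel (ρ : Measure (α × ℝ)) (a : α) :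
    cdf (condCDFKernel ρ a) = condCDF ρ a :=
  cdf_measure_stieltjesFunction _ (tendsto_condCDF_atBot ρ a) (tendsto_condCDF_atTop ρ a)

lemma fst_compProd_condCDFKernel (ρ : Measure (α × ℝ)) [IsFiniteMeasure ρ] :
    ρ.fst ⊗ₘ condCDFKernel ρ = ρ := by
  ext s hs
  rw [Measure.compProd_apply hs]
  exact lintegral_toKernel_mem (isCondKernelCDF_condCDF ρ) () hs

theorem darmois_construction_general (ρ : Measure (α × ℝ)) [IsFiniteMeasure ρ]
    (hcont : ∀ᵐ a ∂ρ.fst, Continuous (condCDF ρ a)) :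
    ρ.map (fun p => (p.1, condCDF ρ p.1 p.2)) =
      ρ.fst.prod (volume.restrict (Set.Icc 0 1)) := by
  have hcdf : ∀ᵐ a ∂ρ.fst, Continuous (cdf (condCDFKernel ρ a)) := by
    simpa only [cdf_condCDFKernel] using hcont
  simpa only [cdf_condCDFKernel, fst_compProd_condCDFKernel] using
    map_cdf_compProd ρ.fst (condCDFKernel ρ) hcdf

end CondCDF

/-- Darmois construction / conditional probability integral transform: if for
`ρ.fst`-almost every `a` the conditional CDF `x ↦ condCDF ρ a x` is continuous,
then pushing `ρ` forward by `(a, x) ↦ (a, condCDF ρ a x)` yields the product of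
the first marginal `ρ.fst` with the uniform measure on `[0,1]`.  In particular
`condCDF ρ x₁ x₂` is uniform on `[0,1]` and independent of `x₁`. -/
theorem darmois_construction
    {α : Type*} [MeasurableSpace α]
    (ρ : Measure (α × ℝ)) [IsProbabilityMeasure ρ]
    (hcont : ∀ᵐ a ∂ρ.fst, Continuous (fun x : ℝ => condCDF ρ a x)) :
    Measure.map (fun p : α × ℝ => (p.1, condCDF ρ p.1 p.2)) ρ =
      ρ.fst.prod (volume.restrict (Set.Icc (0 : ℝ) 1)) :=
  darmois_construction_general ρ hcont
end

section
/- Liouville-type theorem (locally isometric maps are orthogonally affine): let n ≥ 2 and let f : EuclideanSpace ℝ (Fin n) → EuclideanSpace ℝ (Fin n) be twice continuously differentiable (C²) such that for every x the Fréchet derivative Df(x) is a linear isometry, i.e., ‖Df(x) v‖ = ‖v‖ for all v. Then f is orthogonally affine: there exist a linear isometry equivalence U : EuclideanSpace ℝ (Fin n) ≃ₗᵢ[ℝ] EuclideanSpace ℝ (Fin n) and a vector b such that f(x) = U x + b for all x. -/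
/-!
Differentiating `⟪Df(x) u, Df(x) v⟫ = ⟪u, v⟫` in the direction `w` shows that
`⟪D²f(x) w u, Df(x) v⟫` is antisymmetric in `u` and `v`, while Schwarz's theorem makes it symmetric
in `w` and `u`. A trilinear expression with these two symmetries vanishes (as in the uniqueness of
the Levi-Civita connection), so `D²f(x) w u` is orthogonal to the range of `Df(x)`. When that range
is dense, `D²f = 0`, hence `Df` is constant.
-/

open scoped InnerProductSpace Topology

theorem eq_zero_of_symm_left_of_antisymm_right {α A : Type*} [AddGroup A] [IsAddTorsionFree A]
    {T : α → α → α → A} (hsymm : ∀ u v w, T u v w = T v u w)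
    (hanti : ∀ u v w, T u v w = -T u w v) (u v w : α) : T u v w = 0 := by
  refine self_eq_neg.mp ?_
  calc
    T u v w = -T w u v := by rw [hanti, hsymm]
    _ = T v w u := by rw [hanti, neg_neg, hsymm]
    _ = -T u v w := by rw [hanti, hsymm]

section InnerProductSpace

variable {E F G : Type*} [NormedAddCommGroup E] [InnerProductSpace ℝ E]
  [NormedAddCommGroup F] [InnerProductSpace ℝ F] [NormedAddCommGroup G] [NormedSpace ℝ G]

theorem inner_fderiv_apply_antisymm_of_norm_map {L : G → E →L[ℝ] F}
    {L' : G →L[ℝ] E →L[ℝ] F} {x : G} (hL : HasFDerivAt L L' x)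
    (hiso : ∀ᶠ y in 𝓝 x, ∀ v, ‖L y v‖ = ‖v‖) (w : G) (u v : E) :
    ⟪L' w u, L x v⟫_ℝ = -⟪L' w v, L x u⟫_ℝ := by
  have hconst : (fun y => ⟪L y u, L y v⟫_ℝ) =ᶠ[𝓝 x] fun _ => ⟪u, v⟫_ℝ :=
    hiso.mono fun y hy => (LinearMap.norm_map_iff_inner_map_map (L y)).mp hy u v
  have happly (a : E) : HasFDerivAt (fun y => L y a) (L'.flip a) x := by
    simpa using hL.clm_apply (hasFDerivAt_const a x)
  have hderiv := ((happly u).inner ℝ (happly v)).unique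
    ((hasFDerivAt_const ⟪u, v⟫_ℝ x).congr_of_eventuallyEq hconst)
  have hsum : ⟪L x u, L' w v⟫_ℝ + ⟪L' w u, L x v⟫_ℝ = 0 := by
    simpa using DFunLike.congr_fun hderiv w
  rw [eq_neg_iff_add_eq_zero, add_comm, real_inner_comm, hsum]

theorem second_fderiv_eq_zero_of_norm_map_of_denseRange {f : E → F} {f' : E → E →L[ℝ] F}
    {f'' : E →L[ℝ] E →L[ℝ] F} {x : E} (hf : ∀ᶠ y in 𝓝 x, HasFDerivAt f (f' y) y)
    (hf' : HasFDerivAt f' f'' x) (hiso : ∀ᶠ y in 𝓝 x, ∀ v, ‖f' y v‖ = ‖v‖)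
    (hdense : DenseRange (f' x)) : f'' = 0 := by
  have hsymm (u v : E) : f'' u v = f'' v u :=
    second_derivative_symmetric_of_eventually hf hf' u v
  have horth (u v w : E) : ⟪f'' u v, f' x w⟫_ℝ = 0 :=
    eq_zero_of_symm_left_of_antisymm_right (T := fun u v w => ⟪f'' u v, f' x w⟫_ℝ)
      (fun u v w => by rw [hsymm]) (inner_fderiv_apply_antisymm_of_norm_map hf' hiso) u v w
  ext u v
  exact hdense.eq_zero_of_inner_left ℝ (horth u v)

theorem locally_isometric_is_orthogonally_affine_general {f : E → F} (hf : Differentiable ℝ f)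
    (hf' : Differentiable ℝ (fderiv ℝ f)) (hiso : ∀ x v, ‖fderiv ℝ f x v‖ = ‖v‖)
    (hsurj : ∀ x, Function.Surjective (fderiv ℝ f x)) :
    ∃ (U : E ≃ₗᵢ[ℝ] F) (b : F), ∀ x, f x = U x + b := by
  have hzero (x : E) : fderiv ℝ (fderiv ℝ f) x = 0 :=
    second_fderiv_eq_zero_of_norm_map_of_denseRange (.of_forall fun y => (hf y).hasFDerivAt)
      (hf' x).hasFDerivAt (.of_forall hiso) (hsurj x).denseRange
  have hconst (x : E) : fderiv ℝ f x = fderiv ℝ f 0 := is_const_of_fderiv_eq_zero hf' hzero x 0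
  let U : E ≃ₗᵢ[ℝ] F :=
    .ofSurjective ⟨(fderiv ℝ f 0).toLinearMap, hiso 0⟩ (hsurj 0)
  have haffine : f = fun x => fderiv ℝ f 0 x + f 0 :=
    eq_of_fderiv_eq hf (by fun_prop) (fun x => by simp [hconst x]) 0 (by simp)
  exact ⟨U, f 0, congrFun haffine⟩

end InnerProductSpace

/-- Liouville-type theorem: a C² map of `n`-dimensional Euclidean space
(`n ≥ 2`) whose Fréchet derivative is a linear isometry at every point is
orthogonally affine, i.e. of the form `x ↦ U x + b` with `U` an orthogonal
transformation. -/
theorem locally_isometric_is_orthogonally_affine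
    (n : ℕ) (hn : 2 ≤ n)
    (f : EuclideanSpace ℝ (Fin n) → EuclideanSpace ℝ (Fin n))
    (hf : ContDiff ℝ 2 f)
    (hiso : ∀ x v : EuclideanSpace ℝ (Fin n), ‖fderiv ℝ f x v‖ = ‖v‖) :
    ∃ (U : EuclideanSpace ℝ (Fin n) ≃ₗᵢ[ℝ] EuclideanSpace ℝ (Fin n))
      (b : EuclideanSpace ℝ (Fin n)), ∀ x, f x = U x + b :=
  locally_isometric_is_orthogonally_affine_general (hf.differentiable two_ne_zero)
    ((hf.fderiv_right (m := 1) (by norm_num)).differentiable one_ne_zero) hiso fun x =>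
    LinearMap.surjective_of_injective
      (AddMonoidHomClass.isometry_of_norm (fderiv ℝ f x) (hiso x)).injective
end

section
/- Let n ≥ 1 and let f : EuclideanSpace ℝ (Fin n) → EuclideanSpace ℝ (Fin n) be twice continuously differentiable (C²) such that for every x the Fréchet derivative Df(x) is a linear isometry, i.e., ‖Df(x) v‖ = ‖v‖ for all v. Then the second derivative of f vanishes identically: the derivative of x ↦ Df(x) is zero at every point (equivalently, iteratedFDeriv ℝ 2 f x = 0 for all x). -/
/-!
The trilinear form `T u v w = ⟪f'' u v, f' w⟫` is symmetric in `u, v`, because second derivatives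
are, and skew in `v, w`, by differentiating `‖f' v‖ = const` and polarizing. The transpositions
`(u v)` and `(v w)` satisfy the braid relation, so `T u v w` equals its own negative and vanishes.
Hence `f'' u v` is orthogonal to the range of `f'`, which is dense: in finite dimension, an
isometric endomorphism is onto.
-/

open Filter Topology
open scoped RealInnerProductSpace

theorem eq_zero_of_symm_left_of_skew_right {ι A : Type*} [AddGroup A] [IsAddTorsionFree A]
    {T : ι → ι → ι → A} (hsymm : ∀ u v w, T u v w = T v u w)
    (hskew : ∀ u v w, T u v w = -T u w v) (u v w : ι) : T u v w = 0 :=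
  self_eq_neg.mp <| calc
    T u v w = T v u w := hsymm u v w
    _ = -T v w u := hskew v u w
    _ = -T w v u := by rw [hsymm v w u]
    _ = T w u v := by rw [hskew w v u, neg_neg]
    _ = T u w v := hsymm w u v
    _ = -T u v w := hskew u w v

theorem inner_map_eq_neg_of_inner_map_self_eq_zero {M F 𝓐 𝓑 : Type*} [Add M]
    [SeminormedAddCommGroup F] [InnerProductSpace ℝ F] [FunLike 𝓐 M F] [AddHomClass 𝓐 M F]
    [FunLike 𝓑 M F] [AddHomClass 𝓑 M F] {A : 𝓐} {B : 𝓑} (h : ∀ v, ⟪A v, B v⟫ = 0) (v w : M) :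
    ⟪A v, B w⟫ = -⟪A w, B v⟫ := by
  have hadd := h (v + w)
  simp only [map_add, inner_add_left, inner_add_right, h] at hadd
  linarith

section

variable {E F V : Type*} [NormedAddCommGroup E] [NormedSpace ℝ E]
  [NormedAddCommGroup F] [InnerProductSpace ℝ F] [NormedAddCommGroup V] [NormedSpace ℝ V]

theorem inner_hasFDerivAt_eq_zero_of_eventually_norm_eq {g : E → F} {g' : E →L[ℝ] F} {x : E}
    (hg : HasFDerivAt g g' x) (hnorm : ∀ᶠ y in 𝓝 x, ‖g y‖ = ‖g x‖) (u : E) :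
    ⟪g x, g' u⟫ = 0 := by
  have hconst : HasFDerivAt (‖g ·‖ ^ 2) (0 : E →L[ℝ] ℝ) x :=
    (hasFDerivAt_const (‖g x‖ ^ 2) x).congr_of_eventuallyEq <|
      hnorm.mono fun y hy => congrArg (· ^ 2) hy
  simpa using DFunLike.congr_fun (hg.norm_sq.unique hconst) u

theorem inner_hasFDerivAt_clm_eq_neg_of_eventually_norm_eq {A : E → V →L[ℝ] F}
    {A' : E →L[ℝ] V →L[ℝ] F} {x : E} (hA : HasFDerivAt A A' x)
    (hnorm : ∀ v, ∀ᶠ y in 𝓝 x, ‖A y v‖ = ‖A x v‖) (u : E) (v w : V) :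
    ⟪A' u v, A x w⟫ = -⟪A' u w, A x v⟫ := by
  refine inner_map_eq_neg_of_inner_map_self_eq_zero (fun v => ?_) v w
  have hv : HasFDerivAt (fun y => A y v) (A'.flip v) x := by
    simpa using hA.clm_apply (hasFDerivAt_const v x)
  rw [real_inner_comm]
  exact inner_hasFDerivAt_eq_zero_of_eventually_norm_eq hv (hnorm v) u

theorem locally_isometric_second_derivative_zero_general {f : E → F} {f' : E → E →L[ℝ] F}
    {f'' : E →L[ℝ] E →L[ℝ] F} {x : E} (hf : ∀ᶠ y in 𝓝 x, HasFDerivAt f (f' y) y)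
    (hf' : HasFDerivAt f' f'' x) (hnorm : ∀ v, ∀ᶠ y in 𝓝 x, ‖f' y v‖ = ‖f' x v‖)
    (hrange : DenseRange (f' x)) : f'' = 0 := by
  have hsymm (u v w : E) : ⟪f'' u v, f' x w⟫ = ⟪f'' v u, f' x w⟫ := by
    rw [second_derivative_symmetric_of_eventually hf hf' u v]
  have hskew (u v w : E) : ⟪f'' u v, f' x w⟫ = -⟪f'' u w, f' x v⟫ :=
    inner_hasFDerivAt_clm_eq_neg_of_eventually_norm_eq hf' hnorm u v w
  ext u v
  exact hrange.eq_zero_of_inner_left ℝ <|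
    eq_zero_of_symm_left_of_skew_right hsymm hskew u v

end

/-- Key step of the Liouville-type theorem: a C² map of `n`-dimensional
Euclidean space (`n ≥ 1`) whose Fréchet derivative is a linear isometry at
every point has identically vanishing second derivative. -/
theorem locally_isometric_second_derivative_zero
    (n : ℕ) (hn : 1 ≤ n)
    (f : EuclideanSpace ℝ (Fin n) → EuclideanSpace ℝ (Fin n))
    (hf : ContDiff ℝ 2 f)
    (hiso : ∀ x v : EuclideanSpace ℝ (Fin n), ‖fderiv ℝ f x v‖ = ‖v‖) :
    ∀ x, fderiv ℝ (fun y => fderiv ℝ f y) x = 0 := by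
  intro x
  have hdiff : Differentiable ℝ f := hf.differentiable two_ne_zero
  have hdiff' : Differentiable ℝ (fderiv ℝ f) :=
    (hf.fderiv_right one_add_one_eq_two.le).differentiable one_ne_zero
  let L : EuclideanSpace ℝ (Fin n) →ₗᵢ[ℝ] EuclideanSpace ℝ (Fin n) := ⟨fderiv ℝ f x, hiso x⟩
  have hsurj : Function.Surjective (fderiv ℝ f x) := (L.toLinearIsometryEquiv rfl).surjective
  exact locally_isometric_second_derivative_zero_general
    (.of_forall fun y => (hdiff y).hasFDerivAt) (hdiff' x).hasFDerivAt
    (fun v => .of_forall fun y => by rw [hiso, hiso]) hsurj.denseRange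
end
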